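/- arXiv:1203.2243 — 8 statements merged into one kernel-verified Lean document; each statement's English description precedes it below -/
import Mathlib

section
/- In a two-right-angled quadrilateral A E Γ Δ with base ΔΓ (right angles at Δ and Γ, with A and E strictly on the same side of the line through Δ and Γ), if the legs satisfy dist A Δ > dist E Γ, then the summit angle adjacent to the shorter leg is greater: ∠ A E Γ > ∠ Δ A E. -/
open EuclideanGeometry Real RealInnerProductSpace

/-!
Being orthogonal to the base and on the same side of it, the legs point in the same direction, so
the inner product of the two sides of a summit angle is the adjacent leg times the difference of the
adjacent and the opposite leg. Hence the summit angle at the longer leg is acute and the one at the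
shorter leg is obtuse.
-/

section SameSide

variable {R V P : Type*} [CommRing R] [PartialOrder R] [IsStrictOrderedRing R] [AddCommGroup V]
  [Module R V] [AddTorsor V P]

theorem sameRay_vsub_of_wSameSide {s : AffineSubspace R P} {W : Submodule R V}
    (hW : Disjoint s.direction W) {x y p q : P} (h : s.WSameSide x y) (hp : p ∈ s) (hq : q ∈ s)
    (hx : x -ᵥ p ∈ W) (hy : y -ᵥ q ∈ W) : SameRay R (x -ᵥ p) (y -ᵥ q) := by
  obtain ⟨p', hp', q', hq', hray⟩ := h
  have mkQ_vsub_eq {z a b : P} (ha : a ∈ s) (hb : b ∈ s) :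
      s.direction.mkQ (z -ᵥ a) = s.direction.mkQ (z -ᵥ b) := by
    refine (Submodule.Quotient.eq _).2 ?_
    rw [vsub_sub_vsub_cancel_left]
    exact s.vsub_mem_direction hb ha
  have mkQ_injective : Function.Injective (s.direction.mkQ.domRestrict W) := by
    rw [LinearMap.injective_domRestrict_iff, Submodule.ker_mkQ]
    exact hW.symm
  have hray_mkQ : SameRay R (s.direction.mkQ (x -ᵥ p)) (s.direction.mkQ (y -ᵥ q)) := by
    rw [mkQ_vsub_eq hp hp', mkQ_vsub_eq hq hq']
    exact hray.map _
  have hray_W : SameRay R (⟨x -ᵥ p, hx⟩ : W) ⟨y -ᵥ q, hy⟩ :=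
    mkQ_injective.sameRay_map_iff.1 hray_mkQ
  exact hray_W.map W.subtype

end SameSide

section RightAngles

variable {V P : Type*} [NormedAddCommGroup V] [InnerProductSpace ℝ V]

theorem inner_eq_norm_mul_norm_of_sameRay {x y : V} (h : SameRay ℝ x y) : ⟪x, y⟫ = ‖x‖ * ‖y‖ :=
  inner_eq_norm_mul_iff_real.2 h.norm_smul_eq.symm

theorem angle_lt_pi_div_two_of_inner_pos {x y : V} (h : 0 < ⟪x, y⟫) :
    InnerProductGeometry.angle x y < π / 2 :=
  arccos_lt_pi_div_two.2 <| div_pos h <| h.trans_le (real_inner_le_norm x y)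

theorem pi_div_two_lt_angle_of_inner_neg {x y : V} (h : ⟪x, y⟫ < 0) :
    π / 2 < InnerProductGeometry.angle x y := by
  have h_neg : 0 < ⟪x, -y⟫ := by rwa [inner_neg_right, neg_pos]
  linarith [angle_lt_pi_div_two_of_inner_pos h_neg, InnerProductGeometry.angle_neg_right x y]

variable [MetricSpace P] [NormedAddTorsor V P] {A E Γ Δ : P}

theorem vsub_mem_orthogonal_direction_of_angle_eq_pi_div_two {p₁ p₂ p₃ : P}
    (h : ∠ p₁ p₂ p₃ = π / 2) : p₁ -ᵥ p₂ ∈ line[ℝ, p₂, p₃].directionᗮ := by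
  rw [direction_affineSpan, vectorSpan_pair_rev, Submodule.mem_orthogonal_singleton_iff_inner_left]
  exact (InnerProductGeometry.inner_eq_zero_iff_angle_eq_pi_div_two _ _).2 h

theorem sameRay_legs_of_wSameSide (hΔ : ∠ A Δ Γ = π / 2) (hΓ : ∠ E Γ Δ = π / 2)
    (hside : line[ℝ, Δ, Γ].WSameSide A E) : SameRay ℝ (A -ᵥ Δ) (E -ᵥ Γ) := by
  refine sameRay_vsub_of_wSameSide (Submodule.orthogonal_disjoint _) hside
    (left_mem_affineSpan_pair ℝ Δ Γ) (right_mem_affineSpan_pair ℝ Δ Γ)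
    (vsub_mem_orthogonal_direction_of_angle_eq_pi_div_two hΔ) ?_
  rw [Set.pair_comm]
  exact vsub_mem_orthogonal_direction_of_angle_eq_pi_div_two hΓ

theorem inner_summit_eq_dist_mul_dist_sub_dist (hΔ : ∠ A Δ Γ = π / 2)
    (hlegs : SameRay ℝ (A -ᵥ Δ) (E -ᵥ Γ)) :
    ⟪Δ -ᵥ A, E -ᵥ A⟫ = dist A Δ * (dist A Δ - dist E Γ) := by
  have h_base : ⟪A -ᵥ Δ, Γ -ᵥ Δ⟫ = 0 :=
    (InnerProductGeometry.inner_eq_zero_iff_angle_eq_pi_div_two _ _).2 hΔ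
  have h_summit : E -ᵥ A = (E -ᵥ Γ) + (Γ -ᵥ Δ) - (A -ᵥ Δ) := by
    rw [vsub_add_vsub_cancel, vsub_sub_vsub_cancel_right]
  rw [← neg_vsub_eq_vsub_rev A Δ, inner_neg_left, h_summit, inner_sub_right, inner_add_right,
    h_base, inner_eq_norm_mul_norm_of_sameRay hlegs, real_inner_self_eq_norm_mul_norm,
    dist_eq_norm_vsub V A Δ, dist_eq_norm_vsub V E Γ]
  ring

theorem angle_summit_lt_pi_div_two (hΔ : ∠ A Δ Γ = π / 2)
    (hlegs : SameRay ℝ (A -ᵥ Δ) (E -ᵥ Γ)) (hlt : dist E Γ < dist A Δ) : ∠ Δ A E < π / 2 := by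
  refine angle_lt_pi_div_two_of_inner_pos ?_
  rw [inner_summit_eq_dist_mul_dist_sub_dist hΔ hlegs]
  exact mul_pos (dist_nonneg.trans_lt hlt) (sub_pos.2 hlt)

theorem pi_div_two_lt_angle_summit (hΔ : ∠ A Δ Γ = π / 2)
    (hlegs : SameRay ℝ (A -ᵥ Δ) (E -ᵥ Γ)) (hne : A ≠ Δ) (hlt : dist A Δ < dist E Γ) :
    π / 2 < ∠ Δ A E := by
  refine pi_div_two_lt_angle_of_inner_neg ?_
  rw [inner_summit_eq_dist_mul_dist_sub_dist hΔ hlegs]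
  exact mul_neg_of_pos_of_neg (dist_pos.2 hne) (sub_neg.2 hlt)

theorem stmt4_general (hΔ : ∠ A Δ Γ = π / 2) (hΓ : ∠ E Γ Δ = π / 2)
    (hside : line[ℝ, Δ, Γ].SSameSide A E) (hlt : dist A Δ > dist E Γ) : ∠ A E Γ > ∠ Δ A E := by
  have hlegs : SameRay ℝ (A -ᵥ Δ) (E -ᵥ Γ) := sameRay_legs_of_wSameSide hΔ hΓ hside.wSameSide
  have hEΓ : E ≠ Γ := fun h => hside.right_notMem (h ▸ right_mem_affineSpan_pair ℝ Δ Γ)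
  have h_acute : ∠ Δ A E < π / 2 := angle_summit_lt_pi_div_two hΔ hlegs hlt
  have h_obtuse : π / 2 < ∠ A E Γ := by
    rw [angle_comm]
    exact pi_div_two_lt_angle_summit hΓ hlegs.symm hEΓ hlt
  exact h_acute.trans h_obtuse

end RightAngles

theorem stmt4 (A E Γ Δ : EuclideanSpace ℝ (Fin 2))
    (hne : Δ ≠ Γ)
    (hAd : ∠ A Δ Γ = π / 2)
    (hEg : ∠ E Γ Δ = π / 2)
    (hside : AffineSubspace.SSameSide line[ℝ, Δ, Γ] A E)
    (hlt : dist A Δ > dist E Γ) :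
    ∠ A E Γ > ∠ Δ A E :=
  stmt4_general hAd hEg hside hlt
end

section
/- In a two-right-angled quadrilateral A E Γ Δ with base ΔΓ (right angles at Δ and Γ, with A and E strictly on the same side of the line through Δ and Γ), if the summit angles satisfy ∠ A E Γ > ∠ Δ A E, then the legs satisfy dist A Δ > dist E Γ (the greater summit angle is adjacent to the shorter leg). -/
open EuclideanGeometry Real RealInnerProductSpace

/-
The legs are perpendicular to the base and point to the same side, so they are parallel and equally
directed, and the summit angles are co-interior: they add up to `π`. Hence the angle at `A` is the
smaller one iff it is acute, that is, iff `⟪Δ - A, E - A⟫ > 0`. As the base is orthogonal to the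
legs, this inner product equals `AΔ * (AΔ - EΓ)`.
-/

section Vectors

variable {V : Type*} [NormedAddCommGroup V] [InnerProductSpace ℝ V]

theorem angle_lt_pi_div_two_iff_inner_pos {x y : V} :
    InnerProductGeometry.angle x y < π / 2 ↔ 0 < ⟪x, y⟫ := by
  rw [InnerProductGeometry.angle, Real.arccos_lt_pi_div_two]
  rcases eq_or_ne x 0 with rfl | hx
  · simp
  rcases eq_or_ne y 0 with rfl | hy
  · simp
  exact div_pos_iff_of_pos_right (by positivity)

theorem angle_eq_angle_of_sameRay_right (x : V) {y z : V} (hy : y ≠ 0) (hz : z ≠ 0)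
    (h : SameRay ℝ y z) : InnerProductGeometry.angle x y = InnerProductGeometry.angle x z := by
  obtain ⟨r, hr, rfl⟩ := h.exists_pos_left hy hz
  exact (InnerProductGeometry.angle_smul_right_of_pos x y hr).symm

end Vectors

section Points

variable {V P : Type*} [NormedAddCommGroup V] [InnerProductSpace ℝ V] [MetricSpace P]
  [NormedAddTorsor V P]

theorem vsub_mem_orthogonal_direction_line_iff_angle_eq_pi_div_two {p p₁ p₂ : P} :
    p -ᵥ p₁ ∈ line[ℝ, p₁, p₂].directionᗮ ↔ ∠ p p₁ p₂ = π / 2 := by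
  rw [direction_affineSpan, vectorSpan_pair_rev, Submodule.mem_orthogonal_singleton_iff_inner_left,
    InnerProductGeometry.inner_eq_zero_iff_angle_eq_pi_div_two, EuclideanGeometry.angle]

theorem eq_of_mem_of_vsub_mem_orthogonal {s : AffineSubspace ℝ P} {x p : P} (hx : x ∈ s)
    (hp : p ∈ s) (hxp : x -ᵥ p ∈ s.directionᗮ) : x = p :=
  vsub_eq_zero_iff_eq.1 <| Submodule.disjoint_def.1 s.direction.orthogonal_disjoint _
    (AffineSubspace.vsub_mem_direction hx hp) hxp

theorem sameRay_vsub_of_wSameSide_of_mem_orthogonal {s : AffineSubspace ℝ P} {x y p q : P}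
    (hp : p ∈ s) (hq : q ∈ s) (hx : x -ᵥ p ∈ s.directionᗮ) (hy : y -ᵥ q ∈ s.directionᗮ)
    (hxy : s.WSameSide x y) : SameRay ℝ (x -ᵥ p) (y -ᵥ q) := by
  by_cases hxs : x ∈ s
  · rw [eq_of_mem_of_vsub_mem_orthogonal hxs hp hx, vsub_self]
    exact SameRay.zero_left _
  by_cases hys : y ∈ s
  · rw [eq_of_mem_of_vsub_mem_orthogonal hys hq hy, vsub_self]
    exact SameRay.zero_right _
  obtain ⟨-, -, q', hq', hray⟩ :=
    (AffineSubspace.sSameSide_iff_exists_left hp).1 ⟨hxy, hxs, hys⟩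
  have hxp : x -ᵥ p ≠ 0 := vsub_ne_zero.2 (ne_of_mem_of_not_mem hp hxs).symm
  have hyq' : y -ᵥ q' ≠ 0 := vsub_ne_zero.2 (ne_of_mem_of_not_mem hq' hys).symm
  obtain ⟨r, -, hr⟩ := hray.exists_pos_left hxp hyq'
  have hperp : q' -ᵥ q ∈ s.directionᗮ := by
    rw [← vsub_sub_vsub_cancel_left q' q y, ← hr]
    exact sub_mem hy (Submodule.smul_mem _ r hx)
  have hfoot : q' = q := eq_of_mem_of_vsub_mem_orthogonal hq' hq hperp
  exact hfoot ▸ hray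

theorem angle_add_angle_eq_pi_of_sameRay {A E Γ Δ : P} (hA : A ≠ Δ) (hE : E ≠ Γ)
    (h : SameRay ℝ (A -ᵥ Δ) (E -ᵥ Γ)) : ∠ Δ A E + ∠ A E Γ = π := by
  have hAE : ∠ A E Γ = InnerProductGeometry.angle (A -ᵥ Δ) (E -ᵥ A) := by
    rw [EuclideanGeometry.angle, ← neg_vsub_eq_vsub_rev E A, ← neg_vsub_eq_vsub_rev E Γ,
      InnerProductGeometry.angle_neg_neg, InnerProductGeometry.angle_comm (A -ᵥ Δ),
      angle_eq_angle_of_sameRay_right _ (vsub_ne_zero.2 hA) (vsub_ne_zero.2 hE) h]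
  rw [hAE, EuclideanGeometry.angle, ← neg_vsub_eq_vsub_rev A Δ,
    InnerProductGeometry.angle_neg_left, sub_add_cancel]

theorem inner_vsub_vsub_eq_dist_mul_dist_sub_dist {A E Γ Δ : P} (hA : ⟪A -ᵥ Δ, Γ -ᵥ Δ⟫ = 0)
    (h : SameRay ℝ (A -ᵥ Δ) (E -ᵥ Γ)) :
    ⟪Δ -ᵥ A, E -ᵥ A⟫ = dist A Δ * (dist A Δ - dist E Γ) := by
  have hlegs : ⟪A -ᵥ Δ, E -ᵥ Γ⟫ = dist A Δ * dist E Γ := by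
    rw [dist_eq_norm_vsub V, dist_eq_norm_vsub V]
    exact inner_eq_norm_mul_iff_real.2 h.norm_smul_eq.symm
  have hsummit : E -ᵥ A = (E -ᵥ Γ) + (Γ -ᵥ Δ) - (A -ᵥ Δ) := by
    rw [vsub_add_vsub_cancel, vsub_sub_vsub_cancel_right]
  rw [← neg_vsub_eq_vsub_rev A Δ, inner_neg_left, hsummit, inner_sub_right, inner_add_right,
    hlegs, hA, real_inner_self_eq_norm_sq, ← dist_eq_norm_vsub V]
  ring

theorem stmt5_general {s : AffineSubspace ℝ P} {A E Γ Δ : P} (hΔ : Δ ∈ s) (hΓ : Γ ∈ s)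
    (hA : A -ᵥ Δ ∈ s.directionᗮ) (hE : E -ᵥ Γ ∈ s.directionᗮ) (hside : s.SSameSide A E) :
    ∠ Δ A E < ∠ A E Γ ↔ dist E Γ < dist A Δ := by
  have hAΔ : A ≠ Δ := (ne_of_mem_of_not_mem hΔ hside.left_notMem).symm
  have hEΓ : E ≠ Γ := (ne_of_mem_of_not_mem hΓ hside.right_notMem).symm
  have hray := sameRay_vsub_of_wSameSide_of_mem_orthogonal hΔ hΓ hA hE hside.wSameSide
  have hsum := angle_add_angle_eq_pi_of_sameRay hAΔ hEΓ hray
  have hbase : ⟪A -ᵥ Δ, Γ -ᵥ Δ⟫ = 0 :=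
    Submodule.inner_left_of_mem_orthogonal (AffineSubspace.vsub_mem_direction hΓ hΔ) hA
  calc ∠ Δ A E < ∠ A E Γ
    _ ↔ ∠ Δ A E < π / 2 := by constructor <;> intro _ <;> linarith
    _ ↔ 0 < ⟪Δ -ᵥ A, E -ᵥ A⟫ := angle_lt_pi_div_two_iff_inner_pos
    _ ↔ 0 < dist A Δ * (dist A Δ - dist E Γ) := by
      rw [inner_vsub_vsub_eq_dist_mul_dist_sub_dist hbase hray]
    _ ↔ dist E Γ < dist A Δ := by rw [mul_pos_iff_of_pos_left (dist_pos.2 hAΔ), sub_pos]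

end Points

theorem stmt5 (A E Γ Δ : EuclideanSpace ℝ (Fin 2))
    (hne : Δ ≠ Γ)
    (hAd : ∠ A Δ Γ = π / 2)
    (hEg : ∠ E Γ Δ = π / 2)
    (hside : AffineSubspace.SSameSide line[ℝ, Δ, Γ] A E)
    (hang : ∠ A E Γ > ∠ Δ A E) :
    dist A Δ > dist E Γ := by
  rw [← vsub_mem_orthogonal_direction_line_iff_angle_eq_pi_div_two] at hAd hEg
  exact (stmt5_general (left_mem_affineSpan_pair ℝ Δ Γ) (right_mem_affineSpan_pair ℝ Δ Γ)
    hAd (Set.pair_comm Γ Δ ▸ hEg) hside).1 hang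
end

section
/- In a two-right-angled quadrilateral A E Γ Δ with base ΔΓ (right angles at Δ and Γ, with A and E strictly on the same side of the line through Δ and Γ), if the summit angles are equal, ∠ A E Γ = ∠ Δ A E, then the legs are equal: dist A Δ = dist E Γ. -/
/-!
Put `u = A - Δ`, `v = E - Γ` and `d = Γ - Δ`, so that `A - E = u - (v + d)` with `d` orthogonal to
`u` and `v`. If `c` is the cosine of both summit angles and `ℓ = ‖A - E‖`, then
`c ‖u‖ ℓ = ‖u‖² - ⟪u, v⟫` and `c ‖v‖ ℓ = ‖v‖² - ⟪u, v⟫`. Eliminating `c ℓ` gives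
`(‖u‖ - ‖v‖) (‖u‖ ‖v‖ + ⟪u, v⟫) = 0`, and the second factor vanishes only when `u` and `v` point in
opposite directions or one of them is zero.
-/

open EuclideanGeometry Real RealInnerProductSpace

section

variable {V : Type*} [NormedAddCommGroup V] [InnerProductSpace ℝ V]

theorem sameRay_neg_right_iff_norm_mul_norm_add_inner_eq_zero {u v : V} :
    SameRay ℝ u (-v) ↔ ‖u‖ * ‖v‖ + ⟪u, v⟫ = 0 := by
  rw [sameRay_iff_norm_smul_eq, eq_comm, ← inner_eq_norm_mul_iff_real, inner_neg_right, norm_neg,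
    neg_eq_iff_add_eq_zero, add_comm]

/- For `d = 0` and nonzero `u`, `v` this is the isosceles triangle theorem
`InnerProductGeometry.norm_eq_of_angle_sub_eq_angle_sub_rev_of_angle_ne_pi`. -/
theorem norm_eq_of_angle_sub_add_eq_angle_add_sub_of_inner_eq_zero {u v d : V}
    (hud : ⟪u, d⟫ = 0) (hvd : ⟪v, d⟫ = 0) (hray : ¬SameRay ℝ u (-v))
    (hangle : InnerProductGeometry.angle u (u - (v + d)) =
      InnerProductGeometry.angle v (v + d - u)) :
    ‖u‖ = ‖v‖ := by
  set c := cos (InnerProductGeometry.angle u (u - (v + d))) with hc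
  have hu : c * (‖u‖ * ‖u - (v + d)‖) = ‖u‖ ^ 2 - ⟪u, v⟫ := by
    rw [hc, InnerProductGeometry.cos_angle_mul_norm_mul_norm, inner_sub_right, inner_add_right,
      hud, add_zero, real_inner_self_eq_norm_sq]
  have hv : c * (‖v‖ * ‖u - (v + d)‖) = ‖v‖ ^ 2 - ⟪u, v⟫ := by
    rw [hc, hangle, norm_sub_rev, InnerProductGeometry.cos_angle_mul_norm_mul_norm,
      inner_sub_right, inner_add_right, hvd, add_zero, real_inner_self_eq_norm_sq,
      real_inner_comm]
  have hprod : (‖u‖ - ‖v‖) * (‖u‖ * ‖v‖ + ⟪u, v⟫) = 0 := by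
    linear_combination ‖u‖ * hv - ‖v‖ * hu
  have hne : ‖u‖ * ‖v‖ + ⟪u, v⟫ ≠ 0 :=
    sameRay_neg_right_iff_norm_mul_norm_add_inner_eq_zero.not.1 hray
  exact sub_eq_zero.1 ((mul_eq_zero_iff_right hne).1 hprod)

theorem stmt6_general {P : Type*} [MetricSpace P] [NormedAddTorsor V P] (A E Γ Δ : P)
    (hAd : ∠ A Δ Γ = π / 2)
    (hEg : ∠ E Γ Δ = π / 2)
    (hside : ¬AffineSubspace.WOppSide line[ℝ, Δ, Γ] A E)
    (hang : ∠ A E Γ = ∠ Δ A E) :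
    dist A Δ = dist E Γ := by
  have hud : ⟪A -ᵥ Δ, Γ -ᵥ Δ⟫ = 0 :=
    (InnerProductGeometry.inner_eq_zero_iff_angle_eq_pi_div_two _ _).2 hAd
  have hvd : ⟪E -ᵥ Γ, Γ -ᵥ Δ⟫ = 0 := by
    rw [← neg_vsub_eq_vsub_rev Δ Γ, inner_neg_right, neg_eq_zero]
    exact (InnerProductGeometry.inner_eq_zero_iff_angle_eq_pi_div_two _ _).2 hEg
  have hray : ¬SameRay ℝ (A -ᵥ Δ) (-(E -ᵥ Γ)) := by
    rw [neg_vsub_eq_vsub_rev]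
    exact fun h ↦ hside ⟨Δ, left_mem_affineSpan_pair ℝ Δ Γ, Γ, right_mem_affineSpan_pair ℝ Δ Γ, h⟩
  have hangle : InnerProductGeometry.angle (A -ᵥ Δ) (A -ᵥ E) =
      InnerProductGeometry.angle (E -ᵥ Γ) (E -ᵥ A) := by
    rw [← InnerProductGeometry.angle_neg_neg (A -ᵥ Δ),
      ← InnerProductGeometry.angle_neg_neg (E -ᵥ Γ), neg_vsub_eq_vsub_rev, neg_vsub_eq_vsub_rev,
      neg_vsub_eq_vsub_rev, neg_vsub_eq_vsub_rev, InnerProductGeometry.angle_comm (Γ -ᵥ E)]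
    exact hang.symm
  rw [dist_eq_norm_vsub V, dist_eq_norm_vsub V]
  refine norm_eq_of_angle_sub_add_eq_angle_add_sub_of_inner_eq_zero hud hvd hray ?_
  rwa [vsub_add_vsub_cancel, vsub_sub_vsub_cancel_right, vsub_sub_vsub_cancel_right]

end

theorem stmt6 (A E Γ Δ : EuclideanSpace ℝ (Fin 2))
    (hne : Δ ≠ Γ)
    (hAd : ∠ A Δ Γ = π / 2)
    (hEg : ∠ E Γ Δ = π / 2)
    (hside : AffineSubspace.SSameSide line[ℝ, Δ, Γ] A E)
    (hang : ∠ A E Γ = ∠ Δ A E) :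
    dist A Δ = dist E Γ :=
  stmt6_general A E Γ Δ hAd hEg hside.not_wOppSide hang
end

section
/- In a Saccheri quadrilateral A B Γ Δ with base ΔΓ (right angles at Δ and Γ, equal legs dist A Δ = dist B Γ, with A and B strictly on the same side of the line through Δ and Γ), the segment joining the midpoint Z of the summit AB with the midpoint E of the base ΔΓ is perpendicular to the summit: ⟪(midpoint ℝ A B) - (midpoint ℝ Δ Γ), B - A⟫_ℝ = 0. -/
open EuclideanGeometry Real

local notation "⟪" x ", " y "⟫_ℝ" => @inner ℝ _ _ x y

/-!
The midpoint `E` of `Δ Γ` is equidistant from `A` and `B`, because the triangles `A Δ E` and `B Γ E`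
are congruent by side-angle-side. So is the midpoint of `A B`, and the line through two points
equidistant from `A` and `B` is perpendicular to `A B`.
-/

section

variable {V P : Type*} [NormedAddCommGroup V] [InnerProductSpace ℝ V] [MetricSpace P]
  [NormedAddTorsor V P]

theorem angle_midpoint_rev_right (p₁ p₂ p₃ : P) : ∠ p₁ p₂ (midpoint ℝ p₂ p₃) = ∠ p₁ p₂ p₃ :=
  angle_smul_right_of_pos p₁ (by norm_num : (0 : ℝ) < ⅟2) (midpoint_vsub_left p₂ p₃).symm

theorem dist_midpoint_eq_dist_midpoint_of_angle_eq {A B Γ Δ : P} (hangle : ∠ A Δ Γ = ∠ B Γ Δ)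
    (hleg : dist A Δ = dist B Γ) : dist A (midpoint ℝ Δ Γ) = dist B (midpoint ℝ Δ Γ) := by
  have hbase : ∠ A Δ (midpoint ℝ Δ Γ) = ∠ B Γ (midpoint ℝ Δ Γ) := by
    rw [angle_midpoint_rev_right, midpoint_comm, angle_midpoint_rev_right, hangle]
  have hhalf : dist Δ (midpoint ℝ Δ Γ) = dist Γ (midpoint ℝ Δ Γ) :=
    dist_left_midpoint_eq_dist_right_midpoint Δ Γ
  exact (side_angle_side hbase hleg hhalf).dist_eq 0 2

theorem stmt8_general {A B Γ Δ : P} (hangle : ∠ A Δ Γ = ∠ B Γ Δ) (hleg : dist A Δ = dist B Γ) :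
    ⟪midpoint ℝ A B -ᵥ midpoint ℝ Δ Γ, B -ᵥ A⟫_ℝ = 0 :=
  inner_vsub_vsub_of_dist_eq_of_dist_eq (dist_midpoint_eq_dist_midpoint_of_angle_eq hangle hleg)
    (dist_left_midpoint_eq_dist_right_midpoint A B)

end

theorem stmt8 (A B Γ Δ : EuclideanSpace ℝ (Fin 2))
    (hne : Δ ≠ Γ)
    (hAd : ∠ A Δ Γ = π / 2)
    (hBg : ∠ B Γ Δ = π / 2)
    (hleg : dist A Δ = dist B Γ)
    (hside : AffineSubspace.SSameSide line[ℝ, Δ, Γ] A B) :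
    ⟪(midpoint ℝ A B) - (midpoint ℝ Δ Γ), B - A⟫_ℝ = 0 :=
  stmt8_general (hAd.trans hBg.symm) hleg
end

section
/- In a Saccheri quadrilateral A B Γ Δ with base ΔΓ (right angles at Δ and Γ, equal legs dist A Δ = dist B Γ, with A and B strictly on the same side of the line through Δ and Γ), the segment joining the midpoint Z of the summit AB with the midpoint E of the base ΔΓ is perpendicular to the base: ⟪(midpoint ℝ A B) - (midpoint ℝ Δ Γ), Γ - Δ⟫_ℝ = 0. -/
open EuclideanGeometry Real

local notation "⟪" x ", " y "⟫_ℝ" => @inner ℝ _ _ x y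

theorem inner_midpoint_left {𝕜 V : Type*} [RCLike 𝕜] [SeminormedAddCommGroup V]
    [InnerProductSpace 𝕜 V] (x y z : V) :
    inner 𝕜 (midpoint 𝕜 x y) z = midpoint 𝕜 (inner 𝕜 x z) (inner 𝕜 y z) := by
  simp [midpoint_eq_smul_add, inner_smul_left, inner_add_left, mul_add, RCLike.conj_ofNat]

theorem stmt9_general {V P : Type*} [NormedAddCommGroup V] [InnerProductSpace ℝ V]
    [MetricSpace P] [NormedAddTorsor V P] (A B Γ Δ : P)
    (hAd : ∠ A Δ Γ = π / 2) (hBg : ∠ B Γ Δ = π / 2) :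
    ⟪midpoint ℝ A B -ᵥ midpoint ℝ Δ Γ, Γ -ᵥ Δ⟫_ℝ = 0 := by
  have inner_leg_A : ⟪A -ᵥ Δ, Γ -ᵥ Δ⟫_ℝ = 0 :=
    (InnerProductGeometry.inner_eq_zero_iff_angle_eq_pi_div_two _ _).2 hAd
  have inner_leg_B : ⟪B -ᵥ Γ, Γ -ᵥ Δ⟫_ℝ = 0 := by
    rw [← neg_vsub_eq_vsub_rev Δ Γ, inner_neg_right, neg_eq_zero]
    exact (InnerProductGeometry.inner_eq_zero_iff_angle_eq_pi_div_two _ _).2 hBg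
  calc ⟪midpoint ℝ A B -ᵥ midpoint ℝ Δ Γ, Γ -ᵥ Δ⟫_ℝ
      = ⟪midpoint ℝ (A -ᵥ Δ) (B -ᵥ Γ), Γ -ᵥ Δ⟫_ℝ := by rw [midpoint_vsub_midpoint]
    _ = midpoint ℝ ⟪A -ᵥ Δ, Γ -ᵥ Δ⟫_ℝ ⟪B -ᵥ Γ, Γ -ᵥ Δ⟫_ℝ := inner_midpoint_left _ _ _
    _ = 0 := by rw [inner_leg_A, inner_leg_B, midpoint_self]

theorem stmt9 (A B Γ Δ : EuclideanSpace ℝ (Fin 2))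
    (hne : Δ ≠ Γ)
    (hAd : ∠ A Δ Γ = π / 2)
    (hBg : ∠ B Γ Δ = π / 2)
    (hleg : dist A Δ = dist B Γ)
    (hside : AffineSubspace.SSameSide line[ℝ, Δ, Γ] A B) :
    ⟪(midpoint ℝ A B) - (midpoint ℝ Δ Γ), Γ - Δ⟫_ℝ = 0 :=
  stmt9_general A B Γ Δ hAd hBg
end

section
/- In a Saccheri quadrilateral A B Γ Δ with base ΔΓ (right angles at Δ and Γ, equal legs dist A Δ = dist B Γ, with A and B strictly on the same side of the line through Δ and Γ), with Z = midpoint ℝ A B, the angles that the legs' endpoint segments make at Z are equal: ∠ A Z Δ = ∠ B Z Γ. -/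
open EuclideanGeometry Real RealInnerProductSpace

/-!
The points `A` and `B` project orthogonally to `Δ` and `Γ` on the base, so the midpoint `Z` of `AB`
projects to the midpoint of `ΔΓ` and is therefore equidistant from `Δ` and `Γ`. Together with
`AZ = BZ` and `AΔ = BΓ` this makes the triangles `AZΔ` and `BZΓ` congruent.
-/

section

variable {V P : Type*} [NormedAddCommGroup V] [InnerProductSpace ℝ V] [MetricSpace P]
  [NormedAddTorsor V P] {A B Γ Δ Z : P}

theorem midpoint_mem_perpBisector_iff_inner_vsub_eq_inner_vsub :
    midpoint ℝ A B ∈ AffineSubspace.perpBisector Δ Γ ↔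
      ⟪A -ᵥ Δ, Γ -ᵥ Δ⟫ = ⟪B -ᵥ Γ, Δ -ᵥ Γ⟫ := by
  rw [AffineSubspace.mem_perpBisector_iff_inner_eq_zero, midpoint_vsub_midpoint,
    midpoint_eq_smul_add, inner_smul_left, inner_add_left, ← neg_vsub_eq_vsub_rev Γ Δ,
    inner_neg_right, ← add_eq_zero_iff_eq_neg]
  simp

theorem midpoint_mem_perpBisector_of_angle_eq_pi_div_two (hΔ : ∠ A Δ Γ = π / 2)
    (hΓ : ∠ B Γ Δ = π / 2) : midpoint ℝ A B ∈ AffineSubspace.perpBisector Δ Γ := by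
  have hΔ_inner : ⟪A -ᵥ Δ, Γ -ᵥ Δ⟫ = 0 :=
    InnerProductGeometry.inner_eq_zero_iff_angle_eq_pi_div_two _ _ |>.mpr hΔ
  have hΓ_inner : ⟪B -ᵥ Γ, Δ -ᵥ Γ⟫ = 0 :=
    InnerProductGeometry.inner_eq_zero_iff_angle_eq_pi_div_two _ _ |>.mpr hΓ
  rw [midpoint_mem_perpBisector_iff_inner_vsub_eq_inner_vsub, hΔ_inner, hΓ_inner]

theorem angle_eq_angle_of_mem_perpBisector (hAB : Z ∈ AffineSubspace.perpBisector A B)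
    (hΔΓ : Z ∈ AffineSubspace.perpBisector Δ Γ) (hdist : dist A Δ = dist B Γ) :
    ∠ A Z Δ = ∠ B Z Γ := by
  have hAZ : dist A Z = dist B Z := AffineSubspace.mem_perpBisector_iff_dist_eq'.mp hAB
  have hZΔ : dist Z Δ = dist Z Γ := AffineSubspace.mem_perpBisector_iff_dist_eq.mp hΔΓ
  have hΔA : dist Δ A = dist Γ B := by rw [dist_comm Δ A, dist_comm Γ B, hdist]
  exact angle_eq_of_congruent (side_side_side hAZ hZΔ hΔA) 0 1 2

theorem stmt10_general (hΔ : ∠ A Δ Γ = π / 2) (hΓ : ∠ B Γ Δ = π / 2)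
    (hleg : dist A Δ = dist B Γ) :
    ∠ A (midpoint ℝ A B) Δ = ∠ B (midpoint ℝ A B) Γ :=
  angle_eq_angle_of_mem_perpBisector (AffineSubspace.midpoint_mem_perpBisector A B)
    (midpoint_mem_perpBisector_of_angle_eq_pi_div_two hΔ hΓ) hleg

end

theorem stmt10 (A B Γ Δ : EuclideanSpace ℝ (Fin 2))
    (hne : Δ ≠ Γ)
    (hAd : ∠ A Δ Γ = π / 2)
    (hBg : ∠ B Γ Δ = π / 2)
    (hleg : dist A Δ = dist B Γ)
    (hside : AffineSubspace.SSameSide line[ℝ, Δ, Γ] A B) :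
    ∠ A (midpoint ℝ A B) Δ = ∠ B (midpoint ℝ A B) Γ :=
  stmt10_general hAd hBg hleg
end

section
/- (Theorem 2, Case B.) Let A, B, Γ be points of the Euclidean plane, not collinear, with dist A B = dist B Γ, and let Δ = midpoint ℝ A Γ. If dist A Δ < dist B Δ, then the perpendicular bisector of AB meets the vertex-angle bisector BΔ strictly between B and Δ: there exists a point P with P strictly between B and Δ (Sbtw ℝ B P Δ) and dist P A = dist P B. -/
open EuclideanGeometry Real RealInnerProductSpace

/-! Going from `B` to `Δ` one starts nearer to `B` and ends nearer to `A`, so by connectedness the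
segment contains a point equidistant from `A` and `B`; neither endpoint is equidistant. -/

theorem exists_mem_dist_eq_dist_of_isPreconnected {X : Type*} [PseudoMetricSpace X] {s : Set X}
    (hs : IsPreconnected s) {a b p q : X} (hp : p ∈ s) (hq : q ∈ s)
    (hpab : dist p a ≤ dist p b) (hqba : dist q b ≤ dist q a) :
    ∃ x ∈ s, dist x a = dist x b :=
  hs.intermediate_value₂ hp hq (by fun_prop) (by fun_prop) hpab hqba

theorem isPreconnected_affineSegment {V P : Type*} [AddCommGroup V] [TopologicalSpace V]
    [Module ℝ V] [ContinuousSMul ℝ V] [AddTorsor V P] [TopologicalSpace P]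
    [IsTopologicalAddTorsor P] (p q : P) : IsPreconnected (affineSegment ℝ p q) :=
  isPreconnected_Icc.image _ AffineMap.lineMap_continuous.continuousOn

section NormedAddTorsor

variable {V P : Type*} [SeminormedAddCommGroup V] [NormedSpace ℝ V] [PseudoMetricSpace P]
  [NormedAddTorsor V P]

theorem exists_sbtw_dist_eq_dist {a b p q : P} (hp : dist p a < dist p b)
    (hq : dist q b < dist q a) : ∃ x : P, Sbtw ℝ p x q ∧ dist x a = dist x b := by
  obtain ⟨x, hx, hxab⟩ := exists_mem_dist_eq_dist_of_isPreconnected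
    (isPreconnected_affineSegment p q) (left_mem_affineSegment ℝ p q)
    (right_mem_affineSegment ℝ p q) hp.le hq.le
  have hxp : x ≠ p := fun h ↦ hp.ne (h ▸ hxab)
  have hxq : x ≠ q := fun h ↦ hq.ne' (h ▸ hxab)
  exact ⟨x, ⟨hx, hxp, hxq⟩, hxab⟩

theorem stmt13_general {A B D : P} (h : dist A D < dist B D) :
    ∃ X : P, Sbtw ℝ B X D ∧ dist X A = dist X B := by
  have nearer_B : dist B B < dist B A := by
    rw [dist_self]
    linarith only [h, dist_triangle B A D]
  have nearer_A : dist D A < dist D B := by simpa only [dist_comm D] using h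
  obtain ⟨X, hX, hXBA⟩ := exists_sbtw_dist_eq_dist nearer_B nearer_A
  exact ⟨X, hX, hXBA.symm⟩

end NormedAddTorsor

theorem stmt13 (A B Γ : EuclideanSpace ℝ (Fin 2))
    (hncol : ¬ Collinear ℝ ({A, B, Γ} : Set (EuclideanSpace ℝ (Fin 2))))
    (hiso : dist A B = dist B Γ)
    (h : dist A (midpoint ℝ A Γ) < dist B (midpoint ℝ A Γ)) :
    ∃ P : EuclideanSpace ℝ (Fin 2),
      Sbtw ℝ B P (midpoint ℝ A Γ) ∧ dist P A = dist P B :=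
  stmt13_general h
end

section
/- (Theorem 2, Case Γ.) Let A, B, Γ be points of the Euclidean plane, not collinear, with dist A B = dist B Γ, and let Δ = midpoint ℝ A Γ. If dist A Δ > dist B Δ, then the perpendicular bisector of AB meets the extension of the vertex-angle bisector BΔ beyond Δ: there exists a point P with Δ strictly between B and P (Sbtw ℝ B Δ P) and dist P A = dist P B. -/
open EuclideanGeometry Real RealInnerProductSpace

/-!
The line `BM` meets the perpendicular bisector of `AB` at parameter
`t = AB² / (2 ⟪M - B, A - B⟫)`, where `B` has parameter `0` and `M` has parameter `1`. The law of
cosines gives `2 ⟪M - B, A - B⟫ = AB² + (BM² - AM²)`, so if the angle `ABM` is acute, then `t > 1`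
exactly when `BM < AM`. When `M` is the midpoint of `AΓ`, Apollonius' identity evaluates the inner
product as `BM² + (AB² - BΓ²) / 4`, which is positive when `B ≠ M` and `BΓ ≤ AB`.
-/

section

variable {V P : Type*} [NormedAddCommGroup V] [InnerProductSpace ℝ V] [MetricSpace P]
  [NormedAddTorsor V P]

theorem two_mul_inner_vsub_vsub (a b p : P) :
    2 * ⟪a -ᵥ p, b -ᵥ p⟫ = dist a p ^ 2 + dist b p ^ 2 - dist a b ^ 2 := by
  have h := norm_sub_sq_real (a -ᵥ p) (b -ᵥ p)
  rw [vsub_sub_vsub_cancel_right] at h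
  simp only [dist_eq_norm_vsub V]
  linarith

theorem inner_midpoint_vsub_vsub (a b c : P) :
    ⟪midpoint ℝ a c -ᵥ b, a -ᵥ b⟫ =
      dist b (midpoint ℝ a c) ^ 2 + (dist a b ^ 2 - dist b c ^ 2) / 4 := by
  have apollonius := dist_sq_add_dist_sq_eq_two_mul_dist_midpoint_sq_add_half_dist_sq b a c
  have cosines := two_mul_inner_vsub_vsub (midpoint ℝ a c) a b
  have half : dist (midpoint ℝ a c) a = dist a c / 2 := by
    rw [dist_midpoint_left, Real.norm_two]
    ring
  rw [half, dist_comm _ b] at cosines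
  rw [dist_comm b a] at apollonius
  linarith

theorem lineMap_mem_perpBisector_left_iff (a b m : P) (t : ℝ) :
    AffineMap.lineMap b m t ∈ AffineSubspace.perpBisector b a ↔
      t * ⟪m -ᵥ b, a -ᵥ b⟫ = dist a b ^ 2 / 2 := by
  rw [AffineSubspace.mem_perpBisector_iff_inner_eq, AffineMap.lineMap_vsub_left,
    real_inner_smul_left, dist_comm]

theorem exists_sbtw_mem_perpBisector_of_inner_pos {a b m : P}
    (hacute : 0 < ⟪m -ᵥ b, a -ᵥ b⟫) (hlt : dist b m < dist a m) :
    ∃ p ∈ AffineSubspace.perpBisector b a, Sbtw ℝ b m p := by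
  have hne : b ≠ m := by
    rintro rfl
    simp at hacute
  have hbeyond : ⟪m -ᵥ b, a -ᵥ b⟫ < dist a b ^ 2 / 2 := by
    have hsq : dist b m ^ 2 < dist a m ^ 2 := by gcongr
    have cosines := two_mul_inner_vsub_vsub m a b
    rw [dist_comm m b, dist_comm m a] at cosines
    linarith
  refine ⟨AffineMap.lineMap b m (dist a b ^ 2 / 2 / ⟪m -ᵥ b, a -ᵥ b⟫), ?_, ?_⟩
  · exact (lineMap_mem_perpBisector_left_iff a b m _).2 (div_mul_cancel₀ _ hacute.ne')
  · exact sbtw_iff_left_ne_and_right_mem_image_Ioi.2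
      ⟨hne, Set.mem_image_of_mem _ ((one_lt_div hacute).2 hbeyond)⟩

theorem stmt14_general {A B Γ : P} (hB : B ≠ midpoint ℝ A Γ) (hle : dist B Γ ≤ dist A B)
    (h : dist B (midpoint ℝ A Γ) < dist A (midpoint ℝ A Γ)) :
    ∃ X : P, Sbtw ℝ B (midpoint ℝ A Γ) X ∧ dist X A = dist X B := by
  have hacute : 0 < ⟪midpoint ℝ A Γ -ᵥ B, A -ᵥ B⟫ := by
    have hmedian : 0 < dist B (midpoint ℝ A Γ) := dist_pos.2 hB
    have hsides : dist B Γ ^ 2 ≤ dist A B ^ 2 := by gcongr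
    rw [inner_midpoint_vsub_vsub]
    linarith [pow_pos hmedian 2]
  obtain ⟨X, hX, hsbtw⟩ := exists_sbtw_mem_perpBisector_of_inner_pos hacute h
  exact ⟨X, hsbtw, (AffineSubspace.mem_perpBisector_iff_dist_eq.1 hX).symm⟩

end

theorem stmt14 (A B Γ : EuclideanSpace ℝ (Fin 2))
    (hncol : ¬ Collinear ℝ ({A, B, Γ} : Set (EuclideanSpace ℝ (Fin 2))))
    (hiso : dist A B = dist B Γ)
    (h : dist A (midpoint ℝ A Γ) > dist B (midpoint ℝ A Γ)) :
    ∃ P : EuclideanSpace ℝ (Fin 2),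
      Sbtw ℝ B (midpoint ℝ A Γ) P ∧ dist P A = dist P B :=
  stmt14_general (fun hB ↦ hncol (hB ▸ wbtw_midpoint ℝ A Γ).collinear) hiso.ge h
end
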